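/- Let R be a finite ring, let p be the smallest prime dividing |R|, and let n be the number of distinct primes dividing |R|. Then for k ≥ 1, |{x ∈ R : x^{k+1} = x}| ≤ ((k+1)/p)^n · |R|^{2k/(k+1)}. -/

import Mathlib

open Polynomial in
lemma quot_aux (S : Type) [Ring S] [Finite S] [Nontrivial S] (q : ℕ) [Fact q.Prime]
    (h0 : (q : S) = 0) (k : ℕ) (hk : 1 ≤ k) (y : S) :
    ∃ A : Finset ℕ, A.card ≤ k + 1 ∧ ∀ c : ℕ, (y + c) ^ (k + 1) = y + c → c % q ∈ A := by
  classical
  have hq : q.Prime := Fact.out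
  have hr : ringChar S = q := by
    rcases (Nat.dvd_prime hq).1 (ringChar.dvd h0) with h | h
    · exact absurd h (CharP.ringChar_ne_one)
    · exact h
  have : CharP S q := ringChar.of_eq hr
  let _ : Algebra (ZMod q) S := ZMod.algebra S q
  have : Module.Finite (ZMod q) S := Module.Finite.of_finite
  have hint : IsIntegral (ZMod q) y := IsIntegral.of_finite _ y
  let K := AlgebraicClosure (ZMod q)
  obtain ⟨α, hα⟩ := IsAlgClosed.exists_aeval_eq_zero K (minpoly (ZMod q) y)
    (minpoly.degree_pos hint).ne'
  let P : K[X] := X ^ (k + 1) - X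
  have hdeg : P.natDegree = k + 1 := by
    exact FiniteField.X_pow_card_sub_X_natDegree_eq K (by omega)
  have hP : P ≠ 0 := by
    intro h
    rw [h] at hdeg
    simp at hdeg
  have : CharP K q := charP_of_injective_algebraMap (algebraMap (ZMod q) K).injective q
  let A : Finset ℕ := (Finset.range q).filter (fun r => α + (r : K) ∈ P.roots.toFinset)
  refine ⟨A, ?_, ?_⟩
  · have h1 : A.card ≤ P.roots.toFinset.card := by
      apply Finset.card_le_card_of_injOn (fun r : ℕ => α + (r : K))
      · intro r hr
        exact (Finset.mem_filter.1 hr).2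
      · intro r hr s hs hrs
        have e : (r : K) = s := add_left_cancel hrs
        have hr' := Finset.mem_range.1 (Finset.mem_filter.1 hr).1
        have hs' := Finset.mem_range.1 (Finset.mem_filter.1 hs).1
        have := (CharP.natCast_eq_natCast K q).1 e
        exact Nat.ModEq.eq_of_lt_of_lt this hr' hs'
    calc A.card ≤ _ := h1
      _ ≤ P.roots.card := Multiset.toFinset_card_le _
      _ ≤ P.natDegree := P.card_roots'
      _ = k + 1 := hdeg
  · intro c hc
    have hd : minpoly (ZMod q) y ∣ ((X + (c : (ZMod q)[X])) ^ (k + 1) - (X + (c : (ZMod q)[X]))) := by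
      apply minpoly.dvd
      simp [hc]
    obtain ⟨g, hg⟩ := hd
    have h2 := congrArg (aeval α) hg
    simp only [map_mul, hα, zero_mul, map_sub, map_pow, map_add, aeval_X, map_natCast] at h2
    refine Finset.mem_filter.2 ⟨Finset.mem_range.2 (Nat.mod_lt _ hq.pos), ?_⟩
    have h3 : ((c % q : ℕ) : K) = c :=
      (CharP.natCast_eq_natCast K q).2 (Nat.mod_modEq c q)
    rw [Multiset.mem_toFinset, mem_roots hP, h3]
    simpa [P, IsRoot] using h2

lemma ring_aux (R : Type) [Ring R] [Fintype R] (q : ℕ) (hq : q.Prime)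
    (hd : q ∣ Fintype.card R) (k : ℕ) (hk : 1 ≤ k) (y : R) :
    ∃ A : Finset ℕ, A.card ≤ k + 1 ∧ ∀ c : ℕ, (y + c) ^ (k + 1) = y + c → c % q ∈ A := by
  have : Fact q.Prime := ⟨hq⟩
  let I : Ideal R := Ideal.span {(q : R)}
  have : I.IsTwoSided := ⟨by
    intro a b ha
    obtain ⟨z, rfl⟩ := Ideal.mem_span_singleton'.1 ha
    exact Ideal.mem_span_singleton'.2 ⟨z * b, by
      rw [mul_assoc, mul_assoc, (Nat.cast_commute q b).eq]⟩⟩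
  have : Nontrivial (R ⧸ I) := by
    apply Ideal.Quotient.nontrivial_iff.2
    intro h
    obtain ⟨z, hz⟩ := Ideal.mem_span_singleton'.1 ((Ideal.eq_top_iff_one _).1 h)
    obtain ⟨x, hx⟩ := exists_prime_addOrderOf_dvd_card q hd
    have h1 : (q : R) * x = 0 := by
      rw [← nsmul_eq_mul, ← hx, addOrderOf_nsmul_eq_zero]
    have h2 : x = 0 := by
      rw [← one_mul x, ← hz, mul_assoc, h1, mul_zero]
    rw [h2, addOrderOf_zero] at hx
    exact hq.one_lt.ne hx
  have : Finite (R ⧸ I) := Finite.of_surjective _ (Ideal.Quotient.mk_surjective (I := I))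
  have h0 : ((q : ℕ) : R ⧸ I) = 0 := by
    rw [← map_natCast (Ideal.Quotient.mk I)]
    exact Ideal.Quotient.eq_zero_iff_mem.2 (Ideal.mem_span_singleton_self _)
  obtain ⟨A, hA, h⟩ := quot_aux (R ⧸ I) q h0 k hk (Ideal.Quotient.mk I y)
  refine ⟨A, hA, fun c hc => h c ?_⟩
  simpa using congrArg (Ideal.Quotient.mk I) hc

lemma count_aux (R : Type) [Ring R] [Fintype R] (k : ℕ) (hk : 1 ≤ k) :
    Nat.card {x : R // x ^ (k + 1) = x} * ∏ q ∈ (Fintype.card R).primeFactors, q ≤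
      (k + 1) ^ (Fintype.card R).primeFactors.card * Fintype.card R := by
  classical
  set Q := (Fintype.card R).primeFactors with hQ
  set M := ∏ q ∈ Q, q with hM
  let X : Finset R := Finset.univ.filter (fun x => x ^ (k + 1) = x)
  have hX : Nat.card {x : R // x ^ (k + 1) = x} = X.card := by
    rw [Nat.card_eq_fintype_card, Fintype.card_subtype]
  have key := Finset.card_le_mul_card_image_of_maps_to
    (s := X ×ˢ Finset.range M) (t := (Finset.univ : Finset R))
    (f := fun a => a.1 - (a.2 : R)) (fun _ _ => Finset.mem_univ _)
    ((k + 1) ^ Q.card) (by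
      intro y _
      have hex : ∀ q : ℕ, ∃ A : Finset ℕ, q ∈ Q → A.card ≤ k + 1 ∧
          ∀ c : ℕ, (y + c) ^ (k + 1) = y + c → c % q ∈ A := by
        intro q
        by_cases hq : q ∈ Q
        · obtain ⟨A, hA⟩ := ring_aux R q (Nat.prime_of_mem_primeFactors hq)
            (Nat.dvd_of_mem_primeFactors hq) k hk y
          exact ⟨A, fun _ => hA⟩
        · exact ⟨∅, fun h => absurd h hq⟩
      choose A hA using hex
      calc _ ≤ (Q.pi A).card := by
            apply Finset.card_le_card_of_injOn (fun a => fun q _ => a.2 % q)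
            · rintro ⟨x, c⟩ hx
              simp only [Finset.coe_filter, Finset.mem_product, Set.mem_ofPred_eq] at hx
              refine Finset.mem_pi.2 fun q hq => (hA q hq).2 c ?_
              have hxy : y + (c : R) = x := by rw [← hx.2]; simp
              rw [hxy]
              exact (Finset.mem_filter.1 hx.1.1).2
            · rintro ⟨x, c⟩ hx ⟨x', c'⟩ hx' h
              simp only [Finset.coe_filter, Finset.mem_product, Set.mem_ofPred_eq,
                Finset.mem_range] at hx hx'
              have hmod : ∀ q ∈ Q, c % q = c' % q := fun q hq =>
                congrFun (congrFun h q) hq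
              have hdvd : ((M : ℕ) : ℤ) ∣ (c' : ℤ) - c := by
                rw [hM, Nat.cast_prod]
                apply Finset.prod_dvd_of_coprime
                · intro a ha b hb hab
                  exact Nat.isCoprime_iff_coprime.2
                    ((Nat.coprime_primes (Nat.prime_of_mem_primeFactors ha)
                      (Nat.prime_of_mem_primeFactors hb)).2 hab)
                · intro q hq
                  exact Nat.modEq_iff_dvd.1 (hmod q hq)
              have hcc : c = c' :=
                Nat.ModEq.eq_of_lt_of_lt (Nat.modEq_iff_dvd.2 hdvd) hx.1.2 hx'.1.2
              subst hcc
              have : x = x' := sub_left_injective (hx.2.trans hx'.2.symm)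
              rw [this]
        _ = ∏ q ∈ Q, (A q).card := Finset.card_pi _ _
        _ ≤ ∏ q ∈ Q, (k + 1) := Finset.prod_le_prod' fun q hq => (hA q hq).1
        _ = (k + 1) ^ Q.card := by simp)
  rw [Finset.card_product, Finset.card_range, Finset.card_univ] at key
  rw [hX]
  exact key

/-- For a finite ring `R` with `p` the smallest prime dividing `|R|` and `n` the
number of distinct primes dividing `|R|`, the number of `(k+1)`-potent elements of
`R` is at most `((k+1)/p)^n · |R|^{2k/(k+1)}`. -/
theorem stmt_17 (R : Type) [Ring R] [Fintype R] [Nontrivial R] (k : ℕ) (hk : 1 ≤ k) :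
    (Nat.card {x : R // x ^ (k + 1) = x} : ℝ) ≤
      ((k + 1 : ℝ) / (Fintype.card R).minFac) ^ (Fintype.card R).primeFactors.card *
        (Fintype.card R : ℝ) ^ ((2 * (k : ℝ)) / (k + 1)) := by
  have h := count_aux R k hk
  set N := Fintype.card R with hN
  have hN1 : 1 ≤ N := Fintype.card_pos
  have hp : N.minFac ^ N.primeFactors.card ≤ ∏ q ∈ N.primeFactors, q := by
    rw [← Finset.prod_const]
    exact Finset.prod_le_prod' fun q hq =>
      Nat.minFac_le_of_dvd (Nat.prime_of_mem_primeFactors hq).two_le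
        (Nat.dvd_of_mem_primeFactors hq)
  have h' := (Nat.mul_le_mul_left (Nat.card {x : R // x ^ (k + 1) = x}) hp).trans h
  have h2 : (Nat.card {x : R // x ^ (k + 1) = x} : ℝ) * (N.minFac : ℝ) ^ N.primeFactors.card ≤
      ((k : ℝ) + 1) ^ N.primeFactors.card * N := by exact_mod_cast h'
  have hm : (0 : ℝ) < (N.minFac : ℝ) ^ N.primeFactors.card := by
    have : (0 : ℝ) < N.minFac := by exact_mod_cast Nat.minFac_pos N
    positivity
  have hk' : (1 : ℝ) ≤ k := by exact_mod_cast hk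
  have hpow : (N : ℝ) ≤ (N : ℝ) ^ ((2 * (k : ℝ)) / (k + 1)) := by
    apply Real.self_le_rpow_of_one_le
    · exact_mod_cast hN1
    · rw [le_div_iff₀ (by positivity)]
      linarith
  calc (Nat.card {x : R // x ^ (k + 1) = x} : ℝ)
      ≤ ((k : ℝ) + 1) ^ N.primeFactors.card * N / (N.minFac : ℝ) ^ N.primeFactors.card :=
        (le_div_iff₀ hm).2 h2
    _ = (((k : ℝ) + 1) / N.minFac) ^ N.primeFactors.card * N := by rw [div_pow]; ring
    _ ≤ _ := by gcongr
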